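/- In dimension 1 with multiplicity k > 0, the Dunkl kernel E_λ(x) = j_{k−1/2}(λx) + (λx/(2k+1)) j_{k+1/2}(λx) admits the integral representation E_λ(x) = (Γ(k+1/2)/(√π Γ(k))) ∫_{−1}^{1} (1−u)^{k−1} (1+u)^{k} e^{λxu} du for all λ, x ∈ ℂ. -/

import Mathlib

/-!
Expand `e^{zu}` (with `z = λx`) into its power series and integrate term by term against the weight
`w(u) = (1-u)^{k-1}(1+u)^k`, which is integrable on `[-1, 1]`. Since
`w(u) + w(-u) = 2(1-u²)^{k-1}` and `w(u) - w(-u) = 2u(1-u²)^{k-1}`, folding the integral onto `[0, 1]`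
and substituting `s = u²` turns the moments of `w` into Beta integrals: the moments of order `2m` and
`2m+1` are `B(m+1/2, k)` and `B(m+3/2, k)` (`moment_even`, `moment_odd`). Together with the value
`4^m m! Γ(m+1/2) = (2m)! √π` (`gamma_half`), the even part of the resulting series is
`j_{k-1/2}(z)` and the odd part is `z/(2k+1) · j_{k+1/2}(z)`.
-/

open Real Complex

/-- The normalized modified Bessel function
`j_ν(z) = Γ(ν+1) ∑_ℓ (1/(ℓ!Γ(ν+1+ℓ))) (z/2)^{2ℓ}`. -/
noncomputable def besselJNorm (ν : ℝ) (z : ℂ) : ℂ :=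
  ∑' ℓ : ℕ, (Complex.Gamma (ν + 1) / ((Nat.factorial ℓ : ℂ) * Complex.Gamma (ν + 1 + ℓ))) *
    (z / 2) ^ (2 * ℓ)

/-! ### The weight and its moments -/

/-- The weight `(1-u)^{k-1}(1+u)^k` of the integral representation, as a complex number. -/
noncomputable def dunklWeight (k u : ℝ) : ℂ :=
  (((1 - u) ^ (k - 1) : ℝ) : ℂ) * (((1 + u) ^ k : ℝ) : ℂ)

lemma dunklWeight_intervalIntegrable (k : ℝ) (hk : 0 < k) :
    IntervalIntegrable (dunklWeight k) MeasureTheory.volume (-1) 1 := by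
  have h1 : IntervalIntegrable (fun u : ℝ => (1 - u) ^ (k - 1)) MeasureTheory.volume (-1) 1 := by
    have := (intervalIntegral.intervalIntegrable_rpow' (a := 0) (b := 2) (r := k - 1)
      (by linarith)).comp_sub_left 1
    have h := this.symm
    norm_num at h
    exact h
  have h2 : IntervalIntegrable (fun u : ℝ => (((1 - u) ^ (k - 1) : ℝ) : ℂ))
      MeasureTheory.volume (-1) 1 := ⟨h1.1.ofReal, h1.2.ofReal⟩
  refine h2.mul_continuousOn (g := fun u : ℝ => (((1 + u) ^ k : ℝ) : ℂ)) ?_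
  refine Continuous.continuousOn ?_
  refine continuous_ofReal.comp ?_
  exact (Real.continuous_rpow_const hk.le).comp (continuous_const.add continuous_id)

/-- The substitution `s = u²` in the Beta integral. -/
lemma beta_subst (k : ℝ) (m : ℕ) :
    ∫ u in (0 : ℝ)..1, 2 * (u : ℂ) ^ (2 * m) * (((1 - u ^ 2) ^ (k - 1) : ℝ) : ℂ) =
      Complex.betaIntegral (m + 1 / 2) k := by
  have himg : (fun u : ℝ => u ^ 2) '' Set.Ioo 0 1 = Set.Ioo 0 1 := by
    ext y
    constructor
    · rintro ⟨u, ⟨h0, h1⟩, rfl⟩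
      exact ⟨by positivity, by simp only; nlinarith⟩
    · rintro ⟨h0, h1⟩
      refine ⟨Real.sqrt y, ⟨Real.sqrt_pos.2 h0, ?_⟩, Real.sq_sqrt h0.le⟩
      rw [Real.sqrt_lt' one_pos]
      simpa using h1
  have hinj : Set.InjOn (fun u : ℝ => u ^ 2) (Set.Ioo 0 1) := by
    intro a ha b hb hab
    exact (pow_left_inj₀ ha.1.le hb.1.le two_ne_zero).1 hab
  have key := MeasureTheory.integral_image_eq_integral_abs_deriv_smul
    (f := fun u : ℝ => u ^ 2) (f' := fun u => 2 * u) measurableSet_Ioo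
    (fun u _ => by simpa using (hasDerivAt_pow 2 u).hasDerivWithinAt) hinj
    (fun s : ℝ => (s : ℂ) ^ ((m + 1 / 2 : ℂ) - 1) * (1 - (s : ℂ)) ^ ((k : ℂ) - 1))
  rw [himg] at key
  rw [Complex.betaIntegral, intervalIntegral.integral_of_le zero_le_one,
    intervalIntegral.integral_of_le zero_le_one, MeasureTheory.integral_Ioc_eq_integral_Ioo,
    MeasureTheory.integral_Ioc_eq_integral_Ioo, key]
  refine MeasureTheory.setIntegral_congr_fun measurableSet_Ioo ?_
  rintro u ⟨h0, h1⟩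
  have hpos : 0 < 1 - u ^ 2 := by nlinarith
  have hu : (u : ℂ) ≠ 0 := by exact_mod_cast h0.ne'
  have e1 : (((1 - u ^ 2) ^ (k - 1) : ℝ) : ℂ) = (1 - ((u ^ 2 : ℝ) : ℂ)) ^ ((k : ℂ) - 1) := by
    rw [Complex.ofReal_cpow hpos.le]; push_cast; rfl
  have e2 : (((u ^ 2 : ℝ)) : ℂ) ^ ((m + 1 / 2 : ℂ) - 1) * u = (u : ℂ) ^ (2 * m) := by
    have : ((m + 1 / 2 : ℂ) - 1) = ((m - 1 / 2 : ℝ) : ℂ) := by push_cast; ring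
    rw [this, ← Complex.ofReal_cpow (by positivity), ← Real.rpow_natCast u 2,
      ← Real.rpow_mul h0.le]
    norm_cast
    rw [← Real.rpow_natCast u (2 * m)]
    nth_rewrite 2 [← Real.rpow_one u]
    rw [← Real.rpow_add h0]
    congr 1
    push_cast; ring
  simp only [e1]
  rw [abs_of_pos (by linarith), Complex.real_smul, ← e2]
  push_cast
  ring

/-- Folding an integral over `[-1, 1]` onto `[0, 1]`. -/
lemma integral_fold (f : ℝ → ℂ) (hf : IntervalIntegrable f MeasureTheory.volume (-1) 1) :
    ∫ u in (-1 : ℝ)..1, f u = ∫ u in (0 : ℝ)..1, (f u + f (-u)) := by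
  have hm : IntervalIntegrable f MeasureTheory.volume (-1) 0 :=
    hf.mono_set (by
      rw [Set.uIcc_of_le (by norm_num), Set.uIcc_of_le (by norm_num)]
      exact Set.Icc_subset_Icc le_rfl zero_le_one)
  have hp : IntervalIntegrable f MeasureTheory.volume 0 1 :=
    hf.mono_set (by
      rw [Set.uIcc_of_le (by norm_num), Set.uIcc_of_le (by norm_num)]
      exact Set.Icc_subset_Icc (by norm_num) le_rfl)
  have hn : IntervalIntegrable (fun u => f (-u)) MeasureTheory.volume 0 1 := by
    have := (IntervalIntegrable.iff_comp_neg (f := f) (a := -1) (b := 0)).1 hm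
    simpa using this.symm
  rw [intervalIntegral.integral_add hp hn, intervalIntegral.integral_comp_neg,
    ← intervalIntegral.integral_add_adjacent_intervals hm hp]
  simp [add_comm]

lemma dunklWeight_eq (k u : ℝ) (h0 : -1 < u) (h1 : u < 1) :
    dunklWeight k u = (((1 - u ^ 2) ^ (k - 1) : ℝ) : ℂ) * (1 + u) := by
  have hp : 0 < 1 + u := by linarith
  have hm : 0 < 1 - u := by linarith
  have : (1 - u ^ 2) = (1 - u) * (1 + u) := by ring
  rw [dunklWeight, this, Real.mul_rpow hm.le hp.le, Real.rpow_sub_one hp.ne']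
  have hp' : (1 + u : ℂ) ≠ 0 := by exact_mod_cast hp.ne'
  push_cast
  field_simp

lemma moment_integrable (k : ℝ) (hk : 0 < k) (n : ℕ) :
    IntervalIntegrable (fun u : ℝ => dunklWeight k u * (u : ℂ) ^ n)
      MeasureTheory.volume (-1) 1 :=
  (dunklWeight_intervalIntegrable k hk).mul_continuousOn (by fun_prop)

lemma moment_even (k : ℝ) (hk : 0 < k) (m : ℕ) :
    ∫ u in (-1 : ℝ)..1, dunklWeight k u * (u : ℂ) ^ (2 * m) =
      Complex.betaIntegral (m + 1 / 2) k := by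
  rw [integral_fold _ (moment_integrable k hk _), ← beta_subst]
  rw [intervalIntegral.integral_of_le zero_le_one,
    intervalIntegral.integral_of_le zero_le_one, MeasureTheory.integral_Ioc_eq_integral_Ioo,
    MeasureTheory.integral_Ioc_eq_integral_Ioo]
  refine MeasureTheory.setIntegral_congr_fun measurableSet_Ioo ?_
  rintro u ⟨h0, h1⟩
  simp only
  rw [dunklWeight_eq k u (by linarith) h1, dunklWeight_eq k (-u) (by linarith) (by linarith),
    neg_sq, Complex.ofReal_neg, pow_mul (-(u : ℂ)), neg_sq, ← pow_mul]
  ring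

lemma moment_odd (k : ℝ) (hk : 0 < k) (m : ℕ) :
    ∫ u in (-1 : ℝ)..1, dunklWeight k u * (u : ℂ) ^ (2 * m + 1) =
      Complex.betaIntegral (m + 3 / 2) k := by
  have e : (m + 3 / 2 : ℂ) = ((m + 1 : ℕ) : ℂ) + 1 / 2 := by push_cast; ring
  rw [integral_fold _ (moment_integrable k hk _), e, ← beta_subst]
  rw [intervalIntegral.integral_of_le zero_le_one,
    intervalIntegral.integral_of_le zero_le_one, MeasureTheory.integral_Ioc_eq_integral_Ioo,
    MeasureTheory.integral_Ioc_eq_integral_Ioo]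
  refine MeasureTheory.setIntegral_congr_fun measurableSet_Ioo ?_
  rintro u ⟨h0, h1⟩
  simp only
  rw [dunklWeight_eq k u (by linarith) h1, dunklWeight_eq k (-u) (by linarith) (by linarith),
    neg_sq, Complex.ofReal_neg, pow_succ (-(u : ℂ)), pow_mul (-(u : ℂ)), neg_sq, ← pow_mul]
  ring

/-! ### Termwise integration -/

/-- Termwise integration of the exponential series against the weight. -/
lemma hasSum_moments (k : ℝ) (hk : 0 < k) (z : ℂ) :
    HasSum (fun n : ℕ => z ^ n / (n.factorial : ℂ) *
        ∫ u in (-1 : ℝ)..1, dunklWeight k u * (u : ℂ) ^ n)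
      (∫ u in (-1 : ℝ)..1, dunklWeight k u * Complex.exp (z * u)) := by
  have hw := dunklWeight_intervalIntegrable k hk
  have key := intervalIntegral.hasSum_integral_of_dominated_convergence
    (μ := MeasureTheory.volume) (a := -1) (b := 1)
    (F := fun (n : ℕ) (u : ℝ) => z ^ n / (n.factorial : ℂ) * (dunklWeight k u * (u : ℂ) ^ n))
    (f := fun u : ℝ => dunklWeight k u * Complex.exp (z * u))
    (fun n u => ‖dunklWeight k u‖ * (‖z‖ ^ n / n.factorial))
    (fun n => ((moment_integrable k hk n).const_mul _).def'.aestronglyMeasurable)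
    ?_ ?_ ?_ ?_
  · simpa only [intervalIntegral.integral_const_mul] using key
  · intro n
    refine Filter.Eventually.of_forall fun u hu => ?_
    rw [Set.uIoc_of_le (by norm_num)] at hu
    have hu1 : ‖(u : ℂ)‖ ≤ 1 := by
      rw [Complex.norm_real, Real.norm_eq_abs, abs_le]
      exact ⟨hu.1.le, hu.2⟩
    rw [norm_mul, norm_mul, norm_div, norm_pow, norm_pow, Complex.norm_natCast]
    calc ‖z‖ ^ n / n.factorial * (‖dunklWeight k u‖ * ‖(u : ℂ)‖ ^ n)
        ≤ ‖z‖ ^ n / n.factorial * (‖dunklWeight k u‖ * 1) := by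
          gcongr
          exact pow_le_one₀ (norm_nonneg _) hu1
      _ = _ := by ring
  · exact Filter.Eventually.of_forall fun u _ =>
      (Real.summable_pow_div_factorial ‖z‖).mul_left _
  · simp only [tsum_mul_left]
    exact hw.norm.mul_const _
  · refine Filter.Eventually.of_forall fun u _ => ?_
    have h := (NormedSpace.expSeries_div_hasSum_exp (z * (u : ℂ))).mul_left (dunklWeight k u)
    rw [← Complex.exp_eq_exp_ℂ] at h
    have e : (fun n : ℕ => z ^ n / (n.factorial : ℂ) * (dunklWeight k u * (u : ℂ) ^ n)) =
        fun n : ℕ => dunklWeight k u * ((z * (u : ℂ)) ^ n / (n.factorial : ℂ)) := by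
      funext n
      rw [mul_pow]
      ring
    rw [e]
    exact h

/-! ### Gamma and Beta values -/

/-- The duplication formula at half-integers, in the form needed to match `1 / (2m)!` with
`1 / (4^m m!)`. -/
lemma gamma_half (m : ℕ) :
    (4 : ℂ) ^ m * (m.factorial : ℂ) * Complex.Gamma (m + 1 / 2) =
      ((2 * m).factorial : ℂ) * (Real.sqrt π : ℂ) := by
  induction m with
  | zero =>
    have := Real.Gamma_one_half_eq
    simp only [pow_zero, Nat.factorial_zero, Nat.cast_one, Nat.cast_zero, mul_zero, zero_add,
      one_mul]
    rw [← this, ← Complex.Gamma_ofReal]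
    norm_num
  | succ m ih =>
    have hne : (m + 1 / 2 : ℂ) ≠ 0 := by
      have : (0 : ℝ) < m + 1 / 2 := by positivity
      have h := Complex.ofReal_ne_zero.2 this.ne'
      push_cast at h
      exact h
    have e : ((m + 1 : ℕ) : ℂ) + 1 / 2 = (m + 1 / 2 : ℂ) + 1 := by push_cast; ring
    rw [e, Complex.Gamma_add_one _ hne, show 2 * (m + 1) = 2 * m + 1 + 1 by ring,
      Nat.factorial_succ (2 * m + 1), Nat.factorial_succ (2 * m), Nat.factorial_succ m]
    push_cast
    linear_combination (4 * (m + 1) * (m + 1 / 2) : ℂ) * ih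

lemma gamma_ne (a : ℝ) (ha : 0 < a) : Complex.Gamma a ≠ 0 := by
  rw [Complex.Gamma_ofReal]
  exact Complex.ofReal_ne_zero.2 (Real.Gamma_pos_of_pos ha).ne'

lemma beta_eq (a k : ℝ) (ha : 0 < a) (hk : 0 < k) :
    Complex.betaIntegral a k =
      Complex.Gamma a * Complex.Gamma k / Complex.Gamma ((a + k : ℝ) : ℂ) := by
  rw [eq_div_iff (gamma_ne _ (by linarith)),
    Complex.Gamma_mul_Gamma_eq_betaIntegral (by simpa using ha) (by simpa using hk)]
  push_cast
  ring

/-! ### Matching with the Bessel series -/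

/-- The degree `2m` term of the Bessel series for `j_{k-1/2}` is that of the integrated exponential
series. -/
lemma coeff_even (k : ℝ) (hk : 0 < k) (z : ℂ) (m : ℕ) :
    Complex.Gamma (((k - 1 / 2 : ℝ) : ℂ) + 1) /
        ((m.factorial : ℂ) * Complex.Gamma (((k - 1 / 2 : ℝ) : ℂ) + 1 + m)) * (z / 2) ^ (2 * m) =
      ((Real.Gamma (k + 1 / 2) / (Real.sqrt π * Real.Gamma k) : ℝ) : ℂ) *
        (z ^ (2 * m) / ((2 * m).factorial : ℂ) * Complex.betaIntegral (m + 1 / 2) k) := by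
  have hb := beta_eq (m + 1 / 2) k (by positivity) hk
  have g1 := gamma_ne k hk
  have g2 := gamma_ne (m + 1 / 2 + k) (by positivity)
  have hg := gamma_half m
  have hf : (m.factorial : ℂ) ≠ 0 := by exact_mod_cast m.factorial_ne_zero
  have hf2 : ((2 * m).factorial : ℂ) ≠ 0 := by exact_mod_cast (2 * m).factorial_ne_zero
  have hpi : (Real.sqrt π : ℂ) ≠ 0 := Complex.ofReal_ne_zero.2 (Real.sqrt_pos.2 Real.pi_pos).ne'
  have a1 : ((k - 1 / 2 : ℝ) : ℂ) + 1 = ((k + 1 / 2 : ℝ) : ℂ) := by push_cast; ring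
  have a2 : ((k + 1 / 2 : ℝ) : ℂ) + m = ((m + 1 / 2 + k : ℝ) : ℂ) := by push_cast; ring
  have a3 : ((m + 1 / 2 : ℝ) : ℂ) = m + 1 / 2 := by push_cast; ring
  rw [a3] at hb
  rw [hb, a1, a2, Complex.ofReal_div, Complex.ofReal_mul, ← Complex.Gamma_ofReal,
    ← Complex.Gamma_ofReal, div_pow, pow_mul 2 2 m, show (2 : ℂ) ^ 2 = 4 by norm_num]
  generalize Complex.Gamma ((k + 1 / 2 : ℝ) : ℂ) = G
  generalize Complex.Gamma ((m + 1 / 2 + k : ℝ) : ℂ) = K at *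
  generalize Complex.Gamma (m + 1 / 2 : ℂ) = H at *
  field_simp
  linear_combination (-G * z ^ (2 * m)) * hg

/-- The degree `2m+1` term of `z/(2k+1) · j_{k+1/2}` is that of the integrated exponential series;
the factor `2k+1` cancels through `Γ(k+3/2) = (k+1/2) Γ(k+1/2)`. -/
lemma coeff_odd (k : ℝ) (hk : 0 < k) (z : ℂ) (m : ℕ) :
    z / (2 * k + 1) * (Complex.Gamma (((k + 1 / 2 : ℝ) : ℂ) + 1) /
        ((m.factorial : ℂ) * Complex.Gamma (((k + 1 / 2 : ℝ) : ℂ) + 1 + m)) * (z / 2) ^ (2 * m)) =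
      ((Real.Gamma (k + 1 / 2) / (Real.sqrt π * Real.Gamma k) : ℝ) : ℂ) *
        (z ^ (2 * m + 1) / ((2 * m + 1).factorial : ℂ) *
          Complex.betaIntegral (m + 3 / 2) k) := by
  have hb := beta_eq (m + 3 / 2) k (by positivity) hk
  have g1 := gamma_ne k hk
  have g2 := gamma_ne (m + 3 / 2 + k) (by positivity)
  have hg := gamma_half m
  have hf : (m.factorial : ℂ) ≠ 0 := by exact_mod_cast m.factorial_ne_zero
  have hf2 : ((2 * m).factorial : ℂ) ≠ 0 := by exact_mod_cast (2 * m).factorial_ne_zero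
  have hpi : (Real.sqrt π : ℂ) ≠ 0 := Complex.ofReal_ne_zero.2 (Real.sqrt_pos.2 Real.pi_pos).ne'
  have hk2 : (2 * k + 1 : ℂ) ≠ 0 := by
    have : (2 * k + 1 : ℝ) ≠ 0 := by positivity
    exact_mod_cast this
  have hm2 : (2 * m + 1 : ℂ) ≠ 0 := by exact_mod_cast (2 * m).succ_ne_zero
  have hkh : ((k + 1 / 2 : ℝ) : ℂ) ≠ 0 := Complex.ofReal_ne_zero.2 (by positivity)
  have hmh : (m + 1 / 2 : ℂ) ≠ 0 := by
    intro h
    apply hm2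
    linear_combination 2 * h
  have a2 : ((k + 1 / 2 : ℝ) : ℂ) + 1 + m = ((m + 3 / 2 + k : ℝ) : ℂ) := by push_cast; ring
  have a3 : ((m + 3 / 2 : ℝ) : ℂ) = m + 3 / 2 := by push_cast; ring
  have a4 : (m + 3 / 2 : ℂ) = m + 1 / 2 + 1 := by ring
  have a5 : ((k + 1 / 2 : ℝ) : ℂ) = (2 * k + 1) / 2 := by push_cast; ring
  rw [a3] at hb
  rw [hb, a2, a4, Complex.Gamma_add_one _ hkh, Complex.Gamma_add_one _ hmh,
    Complex.ofReal_div, Complex.ofReal_mul, ← Complex.Gamma_ofReal,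
    ← Complex.Gamma_ofReal, div_pow, pow_mul 2 2 m, show (2 : ℂ) ^ 2 = 4 by norm_num,
    Nat.factorial_succ]
  push_cast only [Nat.cast_mul, Nat.cast_add, Nat.cast_one]
  generalize Complex.Gamma ((k + 1 / 2 : ℝ) : ℂ) = G
  generalize Complex.Gamma ((m + 3 / 2 + k : ℝ) : ℂ) = K at *
  rw [a5, show (m + 1 / 2 : ℂ) * Complex.Gamma (m + 1 / 2)
    = (2 * m + 1) / 2 * Complex.Gamma (m + 1 / 2) by ring]
  generalize Complex.Gamma (m + 1 / 2 : ℂ) = H at *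
  push_cast
  field_simp
  linear_combination (-G * z ^ (2 * m + 1)) * hg

/-- The even and odd parts of the termwise integrated series, with the moments evaluated. -/
lemma tsum_split (k : ℝ) (hk : 0 < k) (z : ℂ) :
    (∑' m : ℕ, z ^ (2 * m) / ((2 * m).factorial : ℂ) * Complex.betaIntegral (m + 1 / 2) k) +
      (∑' m : ℕ, z ^ (2 * m + 1) / ((2 * m + 1).factorial : ℂ) *
        Complex.betaIntegral (m + 3 / 2) k) =
      ∫ u in (-1 : ℝ)..1, dunklWeight k u * Complex.exp (z * u) := by
  have hs := hasSum_moments k hk z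
  rw [← hs.tsum_eq]
  simp only [← moment_even k hk, ← moment_odd k hk]
  exact tsum_even_add_odd
    (f := fun n : ℕ => z ^ n / (n.factorial : ℂ) *
      ∫ u in (-1 : ℝ)..1, dunklWeight k u * (u : ℂ) ^ n)
    (hs.summable.comp_injective (mul_right_injective₀ two_ne_zero))
    (hs.summable.comp_injective ((add_left_injective 1).comp (mul_right_injective₀ two_ne_zero)))

/-- Integral representation of the rank-one Dunkl kernel: for `k > 0` and all `λ, x ∈ ℂ`,
`E_λ(x) = j_{k−1/2}(λx) + (λx/(2k+1)) j_{k+1/2}(λx)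
       = (Γ(k+1/2)/(√π Γ(k))) ∫_{−1}^{1} (1−u)^{k−1}(1+u)^{k} e^{λxu} du`. -/
theorem stmt_15 (k : ℝ) (hk : 0 < k) (lam x : ℂ) :
    besselJNorm (k - 1/2) (lam * x) + (lam * x / (2 * k + 1)) * besselJNorm (k + 1/2) (lam * x) =
      ((Real.Gamma (k + 1/2) / (Real.sqrt π * Real.Gamma k) : ℝ) : ℂ) *
        ∫ u in (-1 : ℝ)..1,
          (((1 - u) ^ (k - 1) : ℝ) : ℂ) * (((1 + u) ^ k : ℝ) : ℂ) * Complex.exp (lam * x * u) := by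
  have hs := tsum_split k hk (lam * x)
  simp only [dunklWeight] at hs
  rw [← hs, besselJNorm, besselJNorm, mul_add, ← tsum_mul_left, ← tsum_mul_left, ← tsum_mul_left]
  congr 1
  · exact tsum_congr fun m => coeff_even k hk _ m
  · exact tsum_congr fun m => coeff_odd k hk _ m
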